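/- Fix N ≥ 1, T > 0, S_N = {0, 1/N, …, 1}, and let V : [0,T] × S_N → ℝ be the unique solution of the Hamilton–Jacobi–Bellman ODE system −(d/dt)V(t,μ) + ((V(t,1−μ) − V(t,μ))⁻)²/2 = Nμ · (V(t,1−μ) − V(t,μ))⁻ · (V(t,μ−1/N) − V(t,μ)) + N(1−μ) · (V(t,μ+1/N) − V(t,1−μ−1/N))⁻ · (V(t,μ+1/N) − V(t,μ)) with terminal condition V(T,μ) = −(2μ−1) (terms with coefficient Nμ omitted at μ = 0, terms with coefficient N(1−μ) omitted at μ = 1). Define Z(t,μ) = V(t,1−μ) − V(t,μ). Then for every t ∈ [0,T] and μ ∈ S_N: Z(t,μ) ≥ 0 whenever μ ≥ 1/2, and Z(t,μ) ≤ 0 whenever μ ≤ 1/2. -/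

import Mathlib

/-- The grid `S_N = {0, 1/N, 2/N, …, 1}` of possible empirical fractions. -/
def gridSN (N : ℕ) : Set ℝ := {μ : ℝ | ∃ k : ℕ, k ≤ N ∧ μ = (k : ℝ) / N}

/-- `V` solves, on `[0,T] × S_N`, the closed Hamilton–Jacobi–Bellman ODE system
`−(d/dt)V(t,μ) + ((V(t,1−μ) − V(t,μ))⁻)²/2
  = Nμ·(V(t,1−μ) − V(t,μ))⁻·(V(t,μ−1/N) − V(t,μ))
    + N(1−μ)·(V(t,μ+1/N) − V(t,1−μ−1/N))⁻·(V(t,μ+1/N) − V(t,μ))`,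
with the `Nμ`-terms omitted at `μ = 0` and the `N(1−μ)`-terms omitted at `μ = 1`;
here `p⁻ = max (−p) 0` is the negative part. -/
def HJBSol (N : ℕ) (T : ℝ) (V : ℝ → ℝ → ℝ) : Prop :=
  ∀ μ ∈ gridSN N, ∀ t ∈ Set.Icc (0:ℝ) T,
    HasDerivWithinAt (fun s : ℝ => V s μ)
      ((max (-(V t (1 - μ) - V t μ)) 0)^2 / 2
        - (if μ = 0 then 0 else
            (N : ℝ) * μ * (max (-(V t (1 - μ) - V t μ)) 0)
              * (V t (μ - 1/(N : ℝ)) - V t μ))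
        - (if μ = 1 then 0 else
            (N : ℝ) * (1 - μ)
              * (max (-(V t (μ + 1/(N : ℝ)) - V t (1 - μ - 1/(N : ℝ)))) 0)
              * (V t (μ + 1/(N : ℝ)) - V t μ)))
      (Set.Icc (0:ℝ) T) t

/-!
Along a solution `V` consider, on the upper half of the grid, both the gaps
`Z(t,μ) = V(t,1-μ) - V(t,μ)` and the drops `V(t,μ) - V(t,μ+1/N)`. If the smallest of all these
quantities at time `t` has a negative value `-S`, then its time derivative is at most `C * S`, with
`C` depending only on `N` and on the oscillation of `V`: every negative part in the equation is
either bounded by `S`, or multiplies a difference of `V` bounded above by `S`. The gaps alone would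
not do, since their equations contain the drops. As everything is nonnegative at the terminal time,
a minimum principle backwards in time keeps it nonnegative.
-/

open Set

section MinimumPrinciple

variable {ι : Type*} [Finite ι]

theorem exists_forall_le_of_isCompact_of_finite [Nonempty ι] {X : Type*} [TopologicalSpace X]
    {K : Set X} (hK : IsCompact K) (hK' : K.Nonempty) {f : ι → X → ℝ}
    (hf : ∀ i, ContinuousOn (f i) K) :
    ∃ i, ∃ t ∈ K, ∀ j, ∀ s ∈ K, f i t ≤ f j s := by
  choose τ hτK hτmin using fun i => hK.exists_isMinOn hK' (hf i)
  obtain ⟨i, hi⟩ := Finite.exists_min fun i => f i (τ i)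
  exact ⟨i, τ i, hτK i, fun j s hs => (hi j).trans (hτmin j hs)⟩

theorem nonneg_of_hasDerivWithinAt_of_isMinOn_Icc {f : ℝ → ℝ} {f' a b t : ℝ}
    (hf : HasDerivWithinAt f f' (Icc a b) t) (hmin : IsMinOn f (Icc a b) t)
    (ht : t ∈ Ico a b) : 0 ≤ f' := by
  have hdir : b - t ∈ posTangentConeAt (Icc a b) t :=
    sub_mem_posTangentConeAt_of_segment_subset <|
      (convex_Icc a b).segment_subset (Ico_subset_Icc_self ht)
        (right_mem_Icc.2 (ht.1.trans ht.2.le))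
  have hslope : 0 ≤ (b - t) * f' := by
    simpa using hmin.localize.hasFDerivWithinAt_nonneg hf.hasFDerivWithinAt hdir
  exact nonneg_of_mul_nonneg_right hslope (sub_pos.2 ht.2)

-- At a negative minimum of all the `exp ((C + 1) * t) * x i t`, the derivative would be negative.
theorem nonneg_of_terminal_nonneg_of_deriv_le_at_min {a b C : ℝ} {x x' : ι → ℝ → ℝ}
    (hx : ∀ i, ∀ t ∈ Icc a b, HasDerivWithinAt (x i) (x' i t) (Icc a b) t)
    (hb : ∀ i, 0 ≤ x i b)
    (hmin : ∀ i, ∀ t ∈ Icc a b, x i t < 0 → (∀ j, x i t ≤ x j t) → x' i t ≤ C * -x i t)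
    (i : ι) {t : ℝ} (ht : t ∈ Icc a b) : 0 ≤ x i t := by
  by_contra! hneg
  have : Nonempty ι := ⟨i⟩
  let y : ι → ℝ → ℝ := fun j s => Real.exp ((C + 1) * s) * x j s
  have hy : ∀ j, ∀ s ∈ Icc a b, HasDerivWithinAt (y j)
      (Real.exp ((C + 1) * s) * ((C + 1) * x j s + x' j s)) (Icc a b) s := fun j s hs => by
    have hexp := ((hasDerivAt_id s).const_mul (C + 1)).exp.hasDerivWithinAt (s := Icc a b)
    exact (hexp.mul (hx j s hs)).congr_deriv (by simp only [id_eq]; ring)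
  obtain ⟨j, s, hs, hjs⟩ := exists_forall_le_of_isCompact_of_finite isCompact_Icc ⟨t, ht⟩
    fun j s hs => (hy j s hs).continuousWithinAt
  have hxneg : x j s < 0 :=
    neg_of_mul_neg_right ((hjs i t ht).trans_lt (mul_neg_of_pos_of_neg (Real.exp_pos _) hneg))
      (Real.exp_pos _).le
  have hsb : s ≠ b := by rintro rfl; exact (hb j).not_gt hxneg
  have hderiv : 0 ≤ (C + 1) * x j s + x' j s :=
    nonneg_of_mul_nonneg_right (nonneg_of_hasDerivWithinAt_of_isMinOn_Icc (hy j s hs) (hjs j)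
      ⟨hs.1, hs.2.lt_of_ne hsb⟩) (Real.exp_pos _)
  have hle := hmin j s hs hxneg fun k => le_of_mul_le_mul_left (hjs k s hs) (Real.exp_pos _)
  linarith

end MinimumPrinciple

section Bounds

theorem negPart_le_of_neg_le {a b : ℝ} (hb : 0 ≤ b) (hab : -b ≤ a) : a⁻ ≤ b :=
  sup_le (neg_le.1 hab) hb

theorem weight_mul_mul_le {n w p q P Q : ℝ} (hn : 0 ≤ n) (hw : w ∈ Icc (0 : ℝ) 1) (hp : 0 ≤ p)
    (hpP : p ≤ P) (hqQ : q ≤ Q) (hQ : 0 ≤ Q) : n * w * p * q ≤ n * P * Q := by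
  have hnw : 0 ≤ n * w := mul_nonneg hn hw.1
  calc n * w * p * q ≤ n * w * p * Q := by gcongr
    _ ≤ n * P * Q := by
      gcongr
      exact mul_le_of_le_one_right hn hw.2

theorem nonneg_of_forall_sub_le {α : Type*} {s : Set α} {u : α → ℝ} {B : ℝ}
    (hB : ∀ x ∈ s, ∀ y ∈ s, u x - u y ≤ B) {x : α} (hx : x ∈ s) : 0 ≤ B :=
  (sub_self (u x)).ge.trans (hB x hx x hx)

end Bounds

section Grid

variable {N : ℕ} {μ : ℝ}

theorem finite_gridSN (N : ℕ) : (gridSN N).Finite :=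
  ((finite_Iic N).image fun k : ℕ => (k : ℝ) / N).subset <| by
    rintro _ ⟨k, hk, rfl⟩
    exact ⟨k, hk, rfl⟩

theorem gridSN_subset_Icc (N : ℕ) : gridSN N ⊆ Icc 0 1 := by
  rintro _ ⟨k, hk, rfl⟩
  exact ⟨by positivity, div_le_one_of_le₀ (by exact_mod_cast hk) (Nat.cast_nonneg N)⟩

theorem one_sub_mem_gridSN (hN : 0 < N) (hμ : μ ∈ gridSN N) : 1 - μ ∈ gridSN N := by
  obtain ⟨k, hk, rfl⟩ := hμ
  refine ⟨N - k, Nat.sub_le N k, ?_⟩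
  rw [Nat.cast_sub hk]
  field_simp

theorem add_inv_mem_gridSN (hN : 0 < N) (hμ : μ ∈ gridSN N) (h1 : μ ≠ 1) :
    μ + 1 / N ∈ gridSN N := by
  obtain ⟨k, hk, rfl⟩ := hμ
  have hkN : k ≠ N := by rintro rfl; exact h1 (div_self (by positivity))
  exact ⟨k + 1, by omega, by push_cast; ring⟩

theorem sub_inv_mem_gridSN (hN : 0 < N) (hμ : μ ∈ gridSN N) (h0 : μ ≠ 0) :
    μ - 1 / N ∈ gridSN N := by
  have h := one_sub_mem_gridSN hN
    (add_inv_mem_gridSN hN (one_sub_mem_gridSN hN hμ) (by simpa using h0))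
  convert h using 1
  ring

/-- The grid points at which at least half of the other players are in state 1. -/
def upperGrid (N : ℕ) : Set ℝ := gridSN N ∩ Ici (1 / 2)

theorem sub_inv_mem_gridSN_of_mem_upperGrid (hN : 0 < N) (hμ : μ ∈ upperGrid N) :
    μ - 1 / N ∈ gridSN N :=
  sub_inv_mem_gridSN hN hμ.1 (one_half_pos.trans_le hμ.2).ne'

theorem add_inv_mem_upperGrid (hN : 0 < N) (hμ : μ ∈ upperGrid N) (h1 : μ ≠ 1) :
    μ + 1 / N ∈ upperGrid N :=
  ⟨add_inv_mem_gridSN hN hμ.1 h1, (mem_Ici.1 hμ.2).trans (by simp)⟩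

theorem sub_inv_mem_upperGrid_or_eq_one_sub (hN : 0 < N) (hμ : μ ∈ upperGrid N)
    (hhalf : μ ≠ 1 / 2) : μ - 1 / N ∈ upperGrid N ∨ μ - 1 / N = 1 - μ := by
  have hgrid := sub_inv_mem_gridSN_of_mem_upperGrid hN hμ
  obtain ⟨⟨k, -, rfl⟩, hle⟩ := hμ
  have hN' : (0 : ℝ) < N := by exact_mod_cast hN
  have hlt : (1 : ℝ) / 2 < k / N := hle.lt_of_ne' hhalf
  rw [div_lt_div_iff₀ two_pos hN'] at hlt
  have hk2 : N < 2 * k := by exact_mod_cast (by linarith : (N : ℝ) < 2 * k)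
  obtain heq | hge : 2 * k = N + 1 ∨ N + 2 ≤ 2 * k := by omega
  · right
    have : (2 : ℝ) * k = N + 1 := by exact_mod_cast heq
    field_simp
    linarith
  · refine .inl ⟨hgrid, ?_⟩
    have : (N : ℝ) + 2 ≤ 2 * k := by exact_mod_cast hge
    rw [mem_Ici, ← sub_div, div_le_div_iff₀ two_pos hN']
    linarith

end Grid

section Drift

/-- The quantity `Z(μ) = u(1 - μ) - u(μ)`: as `u(1 - μ)` is the value of a player in state 0, this
is the excess of the value in state 0 over the value in state 1. -/
def stateGap (u : ℝ → ℝ) (μ : ℝ) : ℝ := u (1 - μ) - u μ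

/-- The decrease of `u` from the grid point `μ` to the next one. -/
noncomputable def stepDrop (N : ℕ) (u : ℝ → ℝ) (μ : ℝ) : ℝ := u μ - u (μ + 1 / N)

/-- The time derivative of `V(·,μ)` prescribed by the Hamilton–Jacobi–Bellman system when the
current values are `u`. The cases `μ = 0` and `μ = 1` need no separate treatment, because the
values of `u` outside the grid are multiplied by `0` there. -/
noncomputable def hjbDrift (N : ℕ) (u : ℝ → ℝ) (μ : ℝ) : ℝ :=
  (stateGap u μ)⁻ ^ 2 / 2 - N * μ * (stateGap u μ)⁻ * (u (μ - 1 / N) - u μ)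
    + N * (1 - μ) * (stateGap u (μ + 1 / N))⁺ * stepDrop N u μ

theorem stateGap_one_sub (u : ℝ → ℝ) (μ : ℝ) : stateGap u (1 - μ) = -stateGap u μ := by
  simp [stateGap]

theorem HJBSol.hasDerivWithinAt {N : ℕ} {T t μ : ℝ} {V : ℝ → ℝ → ℝ} (hV : HJBSol N T V)
    (hμ : μ ∈ gridSN N) (ht : t ∈ Icc 0 T) :
    HasDerivWithinAt (fun s => V s μ) (hjbDrift N (V t) μ) (Icc 0 T) t := by
  refine (hV μ hμ t ht).congr_deriv ?_
  have hreflect : 1 - (μ + 1 / (N : ℝ)) = 1 - μ - 1 / N := by ring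
  simp only [hjbDrift, stateGap, stepDrop, hreflect, posPart_def, negPart_def, neg_sub]
  by_cases h0 : μ = 0
  · simp only [h0, if_true, zero_ne_one, if_false]
    ring
  · by_cases h1 : μ = 1
    · simp only [h1, if_true, one_ne_zero, if_false]
      ring
    · simp only [h0, h1, if_false]
      ring

variable {N : ℕ} {u : ℝ → ℝ} {B S μ : ℝ}

theorem hjbDrift_one_sub_of_stateGap_nonpos (hgap : stateGap u μ ≤ 0) :
    hjbDrift N u (1 - μ) =
      N * μ * (stateGap u (μ - 1 / N))⁻ * (u (1 - μ) - u (1 - (μ - 1 / N))) := by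
  have hreflect : 1 - μ + 1 / (N : ℝ) = 1 - (μ - 1 / N) := by ring
  have hinactive : (-stateGap u μ)⁻ = 0 := negPart_eq_zero.2 (neg_nonneg.2 hgap)
  rw [hjbDrift, stepDrop, hreflect, stateGap_one_sub, stateGap_one_sub, hinactive, posPart_neg]
  ring

theorem hjbDrift_one_sub_le (hN : 0 < N) (hB : ∀ μ ∈ gridSN N, ∀ ν ∈ gridSN N, u μ - u ν ≤ B)
    (hμ : μ ∈ upperGrid N) (hS : 0 ≤ S) (hneg : stateGap u μ < 0)
    (hgap : ∀ ν ∈ upperGrid N, -S ≤ stateGap u ν) :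
    hjbDrift N u (1 - μ) ≤ N * S * B := by
  have hhalf : μ ≠ 1 / 2 := by rintro rfl; norm_num [stateGap] at hneg
  have hprev_mem := sub_inv_mem_gridSN_of_mem_upperGrid hN hμ
  have hprev : -S ≤ stateGap u (μ - 1 / N) := by
    obtain hmem | heq := sub_inv_mem_upperGrid_or_eq_one_sub hN hμ hhalf
    · exact hgap _ hmem
    · rw [heq, stateGap_one_sub]
      linarith
  rw [hjbDrift_one_sub_of_stateGap_nonpos hneg.le]
  exact weight_mul_mul_le N.cast_nonneg (gridSN_subset_Icc N hμ.1) (negPart_nonneg _)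
    (negPart_le_of_neg_le hS hprev)
    (hB _ (one_sub_mem_gridSN hN hμ.1) _ (one_sub_mem_gridSN hN hprev_mem))
    (nonneg_of_forall_sub_le hB hμ.1)

theorem neg_hjbDrift_le (hN : 0 < N) (hB : ∀ μ ∈ gridSN N, ∀ ν ∈ gridSN N, u μ - u ν ≤ B)
    (hμ : μ ∈ upperGrid N) (hS : 0 ≤ S) (hgap : -S ≤ stateGap u μ)
    (hdrop : μ ≠ 1 → -S ≤ stepDrop N u μ) :
    -hjbDrift N u μ ≤ 2 * (N * S * B) := by
  have hB0 : 0 ≤ B := nonneg_of_forall_sub_le hB hμ.1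
  have hμI := gridSN_subset_Icc N hμ.1
  have hdown : N * μ * (stateGap u μ)⁻ * (u (μ - 1 / N) - u μ) ≤ N * S * B :=
    weight_mul_mul_le N.cast_nonneg hμI (negPart_nonneg _) (negPart_le_of_neg_le hS hgap)
      (hB _ (sub_inv_mem_gridSN_of_mem_upperGrid hN hμ) _ hμ.1) hB0
  have hup : N * (1 - μ) * (stateGap u (μ + 1 / N))⁺ * -stepDrop N u μ ≤ N * B * S := by
    by_cases h1 : μ = 1
    · simp only [h1, sub_self, mul_zero, zero_mul]
      positivity
    · have hnext := add_inv_mem_gridSN hN hμ.1 h1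
      exact weight_mul_mul_le N.cast_nonneg ⟨sub_nonneg.2 hμI.2, sub_le_self 1 hμI.1⟩
        (posPart_nonneg _) (sup_le (hB _ (one_sub_mem_gridSN hN hnext) _ hnext) hB0)
        (neg_le.1 (hdrop h1)) hS
  have hsq : 0 ≤ (stateGap u μ)⁻ ^ 2 / 2 := by positivity
  unfold hjbDrift
  linarith

theorem hjbDrift_le (hN : 0 < N) (hB : ∀ μ ∈ gridSN N, ∀ ν ∈ gridSN N, u μ - u ν ≤ B)
    (hμ : μ ∈ upperGrid N) (hS : 0 ≤ S) (hgap : -S ≤ stateGap u μ) (hdrop : stepDrop N u μ ≤ 0) :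
    hjbDrift N u μ ≤ B * S / 2 + N * S * B := by
  have hB0 : 0 ≤ B := nonneg_of_forall_sub_le hB hμ.1
  have hμI := gridSN_subset_Icc N hμ.1
  have hrate : (stateGap u μ)⁻ ≤ S := negPart_le_of_neg_le hS hgap
  have hrate' : (stateGap u μ)⁻ ≤ B :=
    sup_le (by simpa [stateGap] using hB μ hμ.1 _ (one_sub_mem_gridSN hN hμ.1)) hB0
  have hsq : (stateGap u μ)⁻ ^ 2 ≤ B * S := by
    rw [sq]
    exact mul_le_mul hrate' hrate (negPart_nonneg _) hB0
  have hdown : N * μ * (stateGap u μ)⁻ * (u μ - u (μ - 1 / N)) ≤ N * S * B :=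
    weight_mul_mul_le N.cast_nonneg hμI (negPart_nonneg _) hrate
      (hB _ hμ.1 _ (sub_inv_mem_gridSN_of_mem_upperGrid hN hμ)) hB0
  have hup : N * (1 - μ) * (stateGap u (μ + 1 / N))⁺ * stepDrop N u μ ≤ 0 :=
    mul_nonpos_of_nonneg_of_nonpos (mul_nonneg (mul_nonneg (Nat.cast_nonneg N)
      (sub_nonneg.2 hμI.2)) (posPart_nonneg _)) hdrop
  unfold hjbDrift
  linarith

theorem stateGap_hjbDrift_le (hN : 0 < N)
    (hB : ∀ μ ∈ gridSN N, ∀ ν ∈ gridSN N, u μ - u ν ≤ B) (hμ : μ ∈ upperGrid N)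
    (hneg : stateGap u μ < 0) (hgap : ∀ ν ∈ upperGrid N, stateGap u μ ≤ stateGap u ν)
    (hdrop : μ ≠ 1 → stateGap u μ ≤ stepDrop N u μ) :
    stateGap (hjbDrift N u) μ ≤ (3 * N + 1) * B * -stateGap u μ := by
  have hS : 0 ≤ -stateGap u μ := neg_nonneg.2 hneg.le
  have hleft := hjbDrift_one_sub_le hN hB hμ hS hneg (by simpa only [neg_neg] using hgap)
  have hright := neg_hjbDrift_le hN hB hμ hS (neg_neg _).le (by simpa only [neg_neg] using hdrop)
  have hBS : 0 ≤ B * -stateGap u μ := mul_nonneg (nonneg_of_forall_sub_le hB hμ.1) hS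
  rw [stateGap]
  linarith

theorem stepDrop_hjbDrift_le (hN : 0 < N)
    (hB : ∀ μ ∈ gridSN N, ∀ ν ∈ gridSN N, u μ - u ν ≤ B) (hμ : μ ∈ upperGrid N) (hμ1 : μ ≠ 1)
    (hneg : stepDrop N u μ < 0) (hgap : ∀ ν ∈ upperGrid N, stepDrop N u μ ≤ stateGap u ν)
    (hdrop : ∀ ν ∈ upperGrid N, ν ≠ 1 → stepDrop N u μ ≤ stepDrop N u ν) :
    stepDrop N (hjbDrift N u) μ ≤ (3 * N + 1) * B * -stepDrop N u μ := by
  have hS : 0 ≤ -stepDrop N u μ := neg_nonneg.2 hneg.le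
  have hnext := add_inv_mem_upperGrid hN hμ hμ1
  have hleft := hjbDrift_le hN hB hμ hS (by simpa only [neg_neg] using hgap μ hμ) hneg.le
  have hright := neg_hjbDrift_le hN hB hnext hS (by simpa only [neg_neg] using hgap _ hnext)
    (by simpa only [neg_neg] using hdrop _ hnext)
  have hBS : 0 ≤ B * -stepDrop N u μ := mul_nonneg (nonneg_of_forall_sub_le hB hμ.1) hS
  rw [stepDrop]
  linarith

end Drift

namespace HJBSol

variable {N : ℕ} {T : ℝ} {V : ℝ → ℝ → ℝ}

theorem exists_oscillation_bound (hV : HJBSol N T V) :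
    ∃ B, ∀ t ∈ Icc 0 T, ∀ μ ∈ gridSN N, ∀ ν ∈ gridSN N, V t μ - V t ν ≤ B := by
  have := (finite_gridSN N).to_subtype
  have hbdd (p : gridSN N × gridSN N) :
      BddAbove ((fun t => V t p.1 - V t p.2) '' Icc 0 T) :=
    isCompact_Icc.bddAbove_image fun t ht =>
      ((hV.hasDerivWithinAt p.1.2 ht).sub (hV.hasDerivWithinAt p.2.2 ht)).continuousWithinAt
  choose b hb using hbdd
  obtain ⟨B, hB⟩ := (finite_range b).bddAbove
  exact ⟨B, fun t ht μ hμ ν hν => (hb (⟨μ, hμ⟩, ⟨ν, hν⟩) (mem_image_of_mem _ ht)).trans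
    (hB (mem_range_self _))⟩

theorem stateGap_nonneg (hN : 0 < N) (hV : HJBSol N T V)
    (hgapT : ∀ μ ∈ upperGrid N, 0 ≤ stateGap (V T) μ)
    (hdropT : ∀ μ ∈ upperGrid N, μ ≠ 1 → 0 ≤ stepDrop N (V T) μ) :
    ∀ t ∈ Icc 0 T, ∀ μ ∈ upperGrid N, 0 ≤ stateGap (V t) μ := by
  intro t ht μ hμ
  obtain ⟨B, hB⟩ := hV.exists_oscillation_bound
  let I := upperGrid N
  let J : Set ℝ := upperGrid N \ {1}
  have hI : I.Finite := (finite_gridSN N).inter_of_left _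
  have := hI.to_subtype
  have := hI.sdiff.to_subtype (s := J)
  let quantity (u : ℝ → ℝ) : I ⊕ J → ℝ :=
    Sum.elim (fun ν => stateGap u ν) fun ν => stepDrop N u ν
  refine nonneg_of_terminal_nonneg_of_deriv_le_at_min (C := (3 * N + 1) * B)
    (x := fun i s => quantity (V s) i) (x' := fun i s => quantity (hjbDrift N (V s)) i)
    ?deriv ?terminal ?atMin (.inl ⟨μ, hμ⟩) ht
  case deriv =>
    rintro (⟨ν, hν⟩ | ⟨ν, hν, hν1⟩) s hs
    · exact (hV.hasDerivWithinAt (one_sub_mem_gridSN hN hν.1) hs).sub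
        (hV.hasDerivWithinAt hν.1 hs)
    · exact (hV.hasDerivWithinAt hν.1 hs).sub
        (hV.hasDerivWithinAt (add_inv_mem_gridSN hN hν.1 hν1) hs)
  case terminal =>
    rintro (⟨ν, hν⟩ | ⟨ν, hν, hν1⟩)
    exacts [hgapT ν hν, hdropT ν hν hν1]
  case atMin =>
    intro i s hs hneg hle
    have hgap : ∀ κ ∈ upperGrid N, quantity (V s) i ≤ stateGap (V s) κ :=
      fun κ hκ => hle (.inl ⟨κ, hκ⟩)
    have hdrop : ∀ κ ∈ upperGrid N, κ ≠ 1 → quantity (V s) i ≤ stepDrop N (V s) κ :=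
      fun κ hκ hκ1 => hle (.inr ⟨κ, hκ, hκ1⟩)
    obtain ⟨ν, hν⟩ | ⟨ν, hν, hν1⟩ := i
    · exact stateGap_hjbDrift_le hN (hB s hs) hν hneg hgap (hdrop ν hν)
    · exact stepDrop_hjbDrift_le hN (hB s hs) hν hν1 hneg hgap hdrop

end HJBSol

theorem stmt_13_general {N : ℕ} (hN : 0 < N) {T : ℝ} {V : ℝ → ℝ → ℝ} (hV : HJBSol N T V)
    (hanti : AntitoneOn (V T) (upperGrid N))
    (hmajority : ∀ μ ∈ upperGrid N, V T μ ≤ V T (1 - μ)) :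
    ∀ t ∈ Icc (0 : ℝ) T, ∀ μ ∈ gridSN N,
      (1 / 2 ≤ μ → 0 ≤ V t (1 - μ) - V t μ) ∧ (μ ≤ 1 / 2 → V t (1 - μ) - V t μ ≤ 0) := by
  have hdropT : ∀ μ ∈ upperGrid N, μ ≠ 1 → 0 ≤ stepDrop N (V T) μ := fun μ hμ hμ1 =>
    sub_nonneg.2 <| hanti hμ (add_inv_mem_upperGrid hN hμ hμ1) (by simp)
  have hgap := hV.stateGap_nonneg hN (fun μ hμ => sub_nonneg.2 (hmajority μ hμ)) hdropT
  refine fun t ht μ hμ => ⟨fun hle => hgap t ht μ ⟨hμ, hle⟩, fun hle => ?_⟩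
  have hreflect : 1 - μ ∈ upperGrid N :=
    ⟨one_sub_mem_gridSN hN hμ, by rw [mem_Ici]; linarith⟩
  have h := hgap t ht _ hreflect
  rwa [stateGap_one_sub, neg_nonneg] at h

/-- Let `V` be the solution of the HJB ODE system with terminal condition
`V(T,μ) = −(2μ−1)`, and `Z(t,μ) = V(t,1−μ) − V(t,μ)`. Then for every
`t ∈ [0,T]` and `μ ∈ S_N`: `Z(t,μ) ≥ 0` whenever `μ ≥ 1/2`, and `Z(t,μ) ≤ 0`
whenever `μ ≤ 1/2`. -/
theorem stmt_13 (N : ℕ) (hN : 1 ≤ N) (T : ℝ) (hT : 0 < T) (V : ℝ → ℝ → ℝ)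
    (hV : HJBSol N T V) (hterm : ∀ μ ∈ gridSN N, V T μ = -(2*μ - 1)) :
    ∀ t ∈ Set.Icc (0:ℝ) T, ∀ μ ∈ gridSN N,
      (1/2 ≤ μ → 0 ≤ V t (1 - μ) - V t μ) ∧
      (μ ≤ 1/2 → V t (1 - μ) - V t μ ≤ 0) := by
  refine stmt_13_general hN hV (fun μ hμ ν hν hle => ?_) fun μ hμ => ?_
  · linarith [hterm μ hμ.1, hterm ν hν.1]
  · linarith [hterm μ hμ.1, hterm _ (one_sub_mem_gridSN hN hμ.1), mem_Ici.1 hμ.2]
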